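/- Assume char(F) = 3. Let 0 ≤ s ≤ 4, let x_1,…,x_{8−2s} be pairwise different letters among x_1,…,x_d (so d ≥ 8−2s), let a_1,…,a_s ∈ M be words, and let u_1,…,u_{s+1} ∈ M_1 satisfy deg_{x_i}(u_1 u_2 ⋯ u_{s+1}) = 3 for every 1 ≤ i ≤ 8−2s. Then u_1 ā_1 u_2 ā_2 ⋯ u_s ā_s u_{s+1} = 0 in A_{3,d}, where ā = a − a^T. -/

import Mathlib

open FreeAlgebra MulOpposite

/-- The alphabet: `(k, false)` is the letter `x_{k+1}`, `(k, true)` is `x_{k+1}ᵀ`. -/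
abbrev Ltr (d : ℕ) := Fin d × Bool

/-- The free (unital) associative algebra on the `2d` letters.  The free non-unital
algebra `M_F` sits inside it as the span of the nonempty words. -/
abbrev FA (F : Type) [Field F] (d : ℕ) := FreeAlgebra F (Ltr d)

variable (F : Type) [Field F] (d : ℕ)

/-- The word in the free algebra corresponding to a list of letters
(the empty list gives `1`, the unit). -/
def wordOf (l : List (Ltr d)) : FA F d := (l.map (FreeAlgebra.ι F)).prod

/-- The transpose: the linear anti-automorphism with `x ↦ xᵀ`, `xᵀ ↦ x`. -/
def tp (a : FA F d) : FA F d :=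
  ((FreeAlgebra.lift F fun p : Ltr d => op (FreeAlgebra.ι F (p.1, !p.2))) a).unop

/-- `ā = a - aᵀ`. -/
def bar (a : FA F d) : FA F d := a - tp F d a

/-- `T(a,b,c) = a b̄ c̄ + b̄ aᵀ c̄ + b̄ c̄ a`. -/
def Trel (a b c : FA F d) : FA F d :=
  a * bar F d b * bar F d c + bar F d b * tp F d a * bar F d c + bar F d b * bar F d c * a

/-- The copy of the free non-unital algebra `M_F`, i.e. the span of the nonempty words. -/
def MFsub : Submodule F (FA F d) :=
  Submodule.span F {w | ∃ l : List (Ltr d), l ≠ [] ∧ w = wordOf F d l}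

/-- The two-sided ideal such that `A_{3,d} = M_F / (idealA ∩ M_F)`: it is generated by
`a³` for `a ∈ M_F` together with `T(a,b,c)` for `a, b, c ∈ M_F`.  (Since all generators lie in
`M_F`, its intersection with `M_F` is exactly the two-sided ideal of the non-unital algebra
`M_F` generated by these elements; in fact it is contained in `M_F`.)
An element `u ∈ M_F` is zero in `A_{3,d}` iff `u ∈ idealA F d`. -/
def idealA : TwoSidedIdeal (FA F d) :=
  TwoSidedIdeal.span
    ({x | ∃ a ∈ MFsub F d, x = a ^ 3} ∪
     {x | ∃ a ∈ MFsub F d, ∃ b ∈ MFsub F d, ∃ c ∈ MFsub F d, x = Trel F d a b c})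

/-! In characteristic 3, linearizing `a³ = 0` gives the 2-Engel identity `⁅a, ⁅a, b⁆⁆ = 0`, and so
all the letters `x` and `y` of a word can be collected on the left, at the cost of at most one `x`
and one `y` being left behind in commutators.  If `x` and `y` have degree 3, then `x³ = y³ = 0`
leaves only the terms `x² y² v ⁅x, y⁆ w`.  There `⁅x, y⁆` is the bar of `xy` minus
`ȳ xᵀ + y x̄`, and so two letters of degree 3 have been traded for one more bar.  After `4 - s`
trades every term has four bars, and `T(a, b, c) = 0` kills all such products: it makes a product
of three bars change sign under reversal, whence adjacent bars `p q r s` multiply to zero, and it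
moves factors separating the bars out of the way. -/

/-- Rings with `3 = 0` satisfying the 2-Engel identity.  Modulo 3 this identity is the
linearization `a ^ 2 * b + a * b * a + b * a ^ 2 = 0` of `a ^ 3 = 0`; in contrast to `a ^ 3 = 0`, it
survives the adjunction of a unit. -/
class TwoEngelModThree (R : Type*) [Ring R] : Prop where
  three_eq_zero : (3 : R) = 0
  lie_lie_self (a b : R) : ⁅a, ⁅a, b⁆⁆ = 0

namespace TwoEngelModThree

attribute [local instance] LieRing.ofAssociativeRing

variable {R : Type*} [Ring R] [TwoEngelModThree R]

theorem lie_lie_swap (a b c : R) : ⁅a, ⁅b, c⁆⁆ = -⁅b, ⁅a, c⁆⁆ := by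
  have h := lie_lie_self (a + b) c
  simp only [add_lie, lie_add, lie_lie_self, zero_add, add_zero] at h
  exact eq_neg_of_add_eq_zero_right h

theorem lie_lie_eq (a b c : R) : ⁅a, ⁅b, c⁆⁆ = -⁅⁅a, b⁆, c⁆ := by
  have h : ⁅a, ⁅b, c⁆⁆ + ⁅⁅a, b⁆, c⁆ = 3 * ⁅a, ⁅b, c⁆⁆ := by
    rw [lie_lie, lie_lie_swap b a c]
    noncomm_ring
  rw [three_eq_zero, zero_mul] at h
  exact eq_neg_of_add_eq_zero_left h

theorem lie_mul_lie_self (x b c : R) : ⁅x, b⁆ * ⁅x, c⁆ = 0 := by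
  have leibniz : ⁅x, ⁅x, b * c⁆⁆
      = ⁅x, ⁅x, b⁆⁆ * c + b * ⁅x, ⁅x, c⁆⁆ + 3 * (⁅x, b⁆ * ⁅x, c⁆) - ⁅x, b⁆ * ⁅x, c⁆ := by
    simp only [Ring.lie_def]
    noncomm_ring
  simpa [lie_lie_self, three_eq_zero] using leibniz

theorem lie_mul_mul_lie_self (x b r c : R) : ⁅x, b⁆ * r * ⁅x, c⁆ = 0 := by
  have leibniz : ⁅x, b⁆ * r * ⁅x, c⁆ = ⁅x, b⁆ * ⁅x, r * c⁆ - ⁅x, b⁆ * ⁅x, r⁆ * c := by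
    simp only [Ring.lie_def]
    noncomm_ring
  rw [leibniz, lie_mul_lie_self, lie_mul_lie_self, zero_mul, sub_zero]

theorem lie_mul_lie_swap (a b c d : R) : ⁅a, b⁆ * ⁅c, d⁆ = -(⁅c, b⁆ * ⁅a, d⁆) := by
  have h := lie_mul_lie_self (a + c) b d
  simp only [add_lie, add_mul, mul_add, lie_mul_lie_self, zero_add, add_zero] at h
  exact eq_neg_of_add_eq_zero_right h

theorem lie_mul_lie_eq (x y a b : R) : ⁅x, a⁆ * ⁅y, b⁆ = -(⁅x, y⁆ * ⁅a, b⁆) := by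
  rw [← lie_skew x a, neg_mul, lie_mul_lie_swap a x y b, ← lie_skew x y, neg_mul]

theorem lie_lie_mul (x y a b : R) : ⁅y, ⁅x, a⁆ * b⁆ = ⁅x, y⁆ * b * a - a * ⁅x, y⁆ * b := by
  have leibniz : ⁅y, ⁅x, a⁆ * b⁆ = ⁅y, ⁅x, a⁆⁆ * b + ⁅x, a⁆ * ⁅y, b⁆ := by
    simp only [Ring.lie_def]
    noncomm_ring
  rw [leibniz, lie_lie_eq, ← lie_skew y x, neg_lie, neg_neg, lie_mul_lie_eq]
  simp only [Ring.lie_def _ a, Ring.lie_def a]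
  noncomm_ring

theorem lie_lie_mul_swap (x y a b : R) : ⁅x, ⁅y, a⁆ * b⁆ = -⁅y, ⁅x, a⁆ * b⁆ := by
  rw [lie_lie_mul, lie_lie_mul, ← lie_skew x y]
  noncomm_ring

theorem lie_lie_mul_self (x a b : R) : ⁅x, ⁅x, a⁆ * b⁆ = 0 := by
  rw [lie_lie_mul, lie_self, zero_mul, zero_mul, mul_zero, zero_mul, sub_zero]

theorem lie_mul_lie_mul_self (x a y b : R) : ⁅x, a * ⁅x, y⁆ * b⁆ = 0 := by
  have leibniz : ⁅x, a * ⁅x, y⁆ * b⁆ = ⁅x, a⁆ * ⁅x, y⁆ * b + a * ⁅x, ⁅x, y⁆ * b⁆ := by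
    simp only [Ring.lie_def]
    noncomm_ring
  rw [leibniz, lie_mul_lie_self, lie_lie_mul_self, zero_mul, mul_zero, add_zero]

theorem lie_mul_lie_mul_self' (x y a b : R) : ⁅y, a * ⁅x, y⁆ * b⁆ = 0 := by
  rw [← lie_skew x y, mul_neg, neg_mul, lie_neg, lie_mul_lie_mul_self, neg_zero]

theorem lie_pow_succ (x y : R) (n : ℕ) : ⁅x, y ^ (n + 1)⁆ = (n + 1) • (y ^ n * ⁅x, y⁆) := by
  have comm : ⁅x, y⁆ * y = y * ⁅x, y⁆ := by
    have h : ⁅y, ⁅x, y⁆⁆ = 0 := by rw [← lie_skew x y, lie_neg, lie_lie_self, neg_zero]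
    rw [Ring.lie_def, sub_eq_zero] at h
    exact h.symm
  induction n with
  | zero => simp
  | succ n ih =>
    have leibniz : ⁅x, y ^ (n + 2)⁆ = ⁅x, y ^ (n + 1)⁆ * y + y ^ (n + 1) * ⁅x, y⁆ := by
      simp only [Ring.lie_def, pow_succ _ (n + 1)]
      noncomm_ring
    rw [leibniz, ih, smul_mul_assoc, mul_assoc, comm, ← mul_assoc, ← pow_succ, ← succ_nsmul]

theorem lie_pow_mul_lie_self (x y a : R) (n : ℕ) : ⁅x, y ^ n⁆ * ⁅y, a⁆ = 0 := by
  rw [lie_mul_lie_eq, ← lie_skew x y, neg_mul, neg_neg, lie_mul_lie_eq,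
    (Commute.self_pow y n).lie_eq, zero_mul, neg_zero]

end TwoEngelModThree

/-- The elements that occur when a word with `i` factors `x`, `j` factors `y` and remaining
factors `v c`, `c ∈ m`, is normalized by moving every `x` and `y` to the left.  By the identities
of `TwoEngelModThree`, at most one `x` and one `y` get stuck in commutators; they are counted
in `i` and `j`. -/
inductive IsCollected {R α : Type*} [Ring R] (v : α → R) (x y : R) (m : List α) :
    ℕ → ℕ → R → Prop
  | word {i j : ℕ} {A : List α} (hA : A.Perm m) :
      IsCollected v x y m i j (x ^ i * y ^ j * (A.map v).prod)
  | lieFst {i j : ℕ} {A B : List α} (hAB : (A ++ B).Perm m) :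
      IsCollected v x y m (i + 1) j (x ^ i * y ^ j * (⁅x, (A.map v).prod⁆ * (B.map v).prod))
  | lieSnd {i j : ℕ} {A B : List α} (hAB : (A ++ B).Perm m) :
      IsCollected v x y m i (j + 1) (x ^ i * y ^ j * (⁅y, (A.map v).prod⁆ * (B.map v).prod))
  | lieBoth {i j : ℕ} {A B : List α} (hAB : (A ++ B).Perm m) :
      IsCollected v x y m (i + 1) (j + 1)
        (x ^ i * y ^ j * ((A.map v).prod * ⁅x, y⁆ * (B.map v).prod))

/-- The additive span of the collected elements with given degrees and remaining factors. -/
def collectedSpan {R α : Type*} [Ring R] (v : α → R) (x y : R) (m : List α) (i j : ℕ) :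
    AddSubgroup R :=
  AddSubgroup.closure {r | IsCollected v x y m i j r}

theorem pow_mul_pow_mul_mul_snd {R : Type*} [Ring R] (x y p : R) (i j : ℕ) :
    x ^ i * y ^ j * p * y = x ^ i * y ^ (j + 1) * p - x ^ i * y ^ j * ⁅y, p⁆ := by
  simp only [Ring.lie_def, pow_succ]
  noncomm_ring

theorem pow_mul_pow_mul_mul_fst {R : Type*} [Ring R] (x y p : R) (i j : ℕ) :
    x ^ i * y ^ j * p * x =
      x ^ (i + 1) * y ^ j * p - x ^ i * (⁅x, y ^ j⁆ * p) - x ^ i * y ^ j * ⁅x, p⁆ := by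
  simp only [Ring.lie_def, pow_succ]
  noncomm_ring

namespace IsCollected

variable {R α : Type*} [Ring R] {v : α → R} {x y r : R} {m : List α} {i j : ℕ}

theorem mem_collectedSpan (h : IsCollected v x y m i j r) : r ∈ collectedSpan v x y m i j :=
  AddSubgroup.subset_closure h

theorem lieFst_nil {A : List α} (hA : A.Perm m) :
    IsCollected v x y m (i + 1) j (x ^ i * y ^ j * ⁅x, (A.map v).prod⁆) := by
  simpa using lieFst (v := v) (x := x) (y := y) (i := i) (j := j) (A := A) (B := []) (by simpa)

theorem lieSnd_nil {A : List α} (hA : A.Perm m) :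
    IsCollected v x y m i (j + 1) (x ^ i * y ^ j * ⁅y, (A.map v).prod⁆) := by
  simpa using lieSnd (v := v) (x := x) (y := y) (i := i) (j := j) (A := A) (B := []) (by simpa)

theorem lieBoth_nil {A : List α} (hA : A.Perm m) :
    IsCollected v x y m (i + 1) (j + 1) (x ^ i * y ^ j * (⁅x, y⁆ * (A.map v).prod)) := by
  simpa using lieBoth (v := v) (x := x) (y := y) (i := i) (j := j) (A := []) hA

theorem mul_val (h : IsCollected v x y m i j r) (c : α) :
    IsCollected v x y (m ++ [c]) i j (r * v c) := by
  have val_append_singleton (B : List α) : (B.map v).prod * v c = ((B ++ [c]).map v).prod := by simp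
  have append_perm {A B : List α} (h : (A ++ B).Perm m) : (A ++ (B ++ [c])).Perm (m ++ [c]) := by
    simpa using h.append_right [c]
  cases h with
  | word hA =>
    simpa only [mul_assoc, val_append_singleton] using word (hA.append_right [c])
  | lieFst hAB =>
    simpa only [mul_assoc, val_append_singleton] using lieFst (append_perm hAB)
  | lieSnd hAB =>
    simpa only [mul_assoc, val_append_singleton] using lieSnd (append_perm hAB)
  | lieBoth hAB =>
    simpa only [mul_assoc, val_append_singleton] using lieBoth (append_perm hAB)

variable [TwoEngelModThree R]

open TwoEngelModThree

theorem lie_lie_mul_mem {A B : List α} (hAB : (A ++ B).Perm m) :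
    x ^ i * y ^ j * ⁅y, ⁅x, (A.map v).prod⁆ * (B.map v).prod⁆ ∈
      collectedSpan v x y m (i + 1) (j + 1) := by
  have hBA : (B ++ A).Perm m := List.perm_append_comm.trans hAB
  have h := sub_mem (lieBoth_nil (v := v) (x := x) (y := y) (i := i) (j := j) hBA).mem_collectedSpan
    (lieBoth hAB).mem_collectedSpan
  rwa [List.map_append, List.prod_append, ← mul_sub, ← mul_assoc ⁅x, y⁆, ← lie_lie_mul] at h

theorem mul_snd_mem (h : IsCollected v x y m i j r) :
    r * y ∈ collectedSpan v x y m i (j + 1) := by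
  cases h with
  | word hA =>
    rw [pow_mul_pow_mul_mul_snd]
    exact sub_mem (word hA).mem_collectedSpan (lieSnd_nil hA).mem_collectedSpan
  | lieFst hAB =>
    rw [pow_mul_pow_mul_mul_snd]
    exact sub_mem (lieFst hAB).mem_collectedSpan (lie_lie_mul_mem hAB)
  | lieSnd hAB =>
    rw [pow_mul_pow_mul_mul_snd, lie_lie_mul_self, mul_zero, sub_zero]
    exact (lieSnd hAB).mem_collectedSpan
  | lieBoth hAB =>
    rw [pow_mul_pow_mul_mul_snd, lie_mul_lie_mul_self', mul_zero, sub_zero]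
    exact (lieBoth hAB).mem_collectedSpan

theorem lie_pow_mul_mem {A : List α} (hA : A.Perm m) :
    x ^ i * (⁅x, y ^ j⁆ * (A.map v).prod) ∈ collectedSpan v x y m (i + 1) j := by
  cases j with
  | zero => simp [Ring.lie_def]
  | succ j =>
    rw [lie_pow_succ, smul_mul_assoc, mul_smul_comm, mul_assoc (y ^ j), ← mul_assoc (x ^ i)]
    exact nsmul_mem (lieBoth_nil hA).mem_collectedSpan _

theorem mul_fst_mem (h : IsCollected v x y m i j r) :
    r * x ∈ collectedSpan v x y m (i + 1) j := by
  cases h with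
  | word hA =>
    rw [pow_mul_pow_mul_mul_fst]
    exact sub_mem (sub_mem (word hA).mem_collectedSpan (lie_pow_mul_mem hA))
      (lieFst_nil hA).mem_collectedSpan
  | lieFst hAB =>
    rw [pow_mul_pow_mul_mul_fst, lie_lie_mul_self, ← mul_assoc ⁅x, y ^ _⁆, lie_mul_lie_self,
      zero_mul, mul_zero, mul_zero, sub_zero, sub_zero]
    exact (lieFst hAB).mem_collectedSpan
  | lieSnd hAB =>
    rw [pow_mul_pow_mul_mul_fst, lie_lie_mul_swap, ← mul_assoc ⁅x, y ^ _⁆, lie_pow_mul_lie_self,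
      zero_mul, mul_zero, sub_zero, mul_neg, sub_neg_eq_add]
    exact add_mem (lieSnd hAB).mem_collectedSpan (lie_lie_mul_mem hAB)
  | lieBoth hAB =>
    rw [pow_mul_pow_mul_mul_fst, lie_mul_lie_mul_self, ← mul_assoc ⁅x, y ^ _⁆,
      ← mul_assoc ⁅x, y ^ _⁆, lie_mul_mul_lie_self, zero_mul, mul_zero, mul_zero, sub_zero,
      sub_zero]
    exact (lieBoth hAB).mem_collectedSpan

end IsCollected

section Collecting

variable {R α : Type*} [Ring R] {v : α → R} {x y r : R} {m : List α} {i j : ℕ}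

theorem mul_mem_of_mem_collectedSpan {m' : List α} {i' j' : ℕ} {s : R}
    (hs : ∀ t, IsCollected v x y m i j t → t * s ∈ collectedSpan v x y m' i' j')
    (hr : r ∈ collectedSpan v x y m i j) : r * s ∈ collectedSpan v x y m' i' j' := by
  have h : collectedSpan v x y m i j ≤
      (collectedSpan v x y m' i' j').comap (AddMonoidHom.mulRight s) :=
    (AddSubgroup.closure_le _).2 hs
  exact h hr

variable [TwoEngelModThree R]

theorem prod_mem_collectedSpan [DecidableEq α] (v : α → R) {a b : α} (hab : a ≠ b) (L : List α) :
    (L.map v).prod ∈ collectedSpan v (v a) (v b) (L.filter fun c => c ≠ a ∧ c ≠ b)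
      (L.count a) (L.count b) := by
  induction L using List.reverseRecOn with
  | nil => simpa using (IsCollected.word (v := v) (x := v a) (y := v b) (i := 0) (j := 0)
      (.refl [])).mem_collectedSpan
  | append_singleton L c ih =>
    rw [List.map_append, List.prod_append, List.map_singleton, List.prod_singleton]
    obtain rfl | hca := eq_or_ne c a
    · simpa [hab] using mul_mem_of_mem_collectedSpan (fun _ h => h.mul_fst_mem) ih
    obtain rfl | hcb := eq_or_ne c b
    · simpa [hca] using mul_mem_of_mem_collectedSpan (fun _ h => h.mul_snd_mem) ih
    · simpa [hca, hcb] using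
        mul_mem_of_mem_collectedSpan (fun _ h => (h.mul_val c).mem_collectedSpan) ih

theorem prod_eq_zero_of_count_eq_three [DecidableEq α] (v : α → R) {a b : α} (hab : a ≠ b)
    (ha : v a ^ 3 = 0) (hb : v b ^ 3 = 0) {L : List α} (hLa : L.count a = 3) (hLb : L.count b = 3)
    (h : ∀ A B : List α, (A ++ B).Perm (L.filter fun c => c ≠ a ∧ c ≠ b) →
      v a ^ 2 * v b ^ 2 * ((A.map v).prod * ⁅v a, v b⁆ * (B.map v).prod) = 0) :
    (L.map v).prod = 0 := by
  have hL := prod_mem_collectedSpan v hab L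
  rw [hLa, hLb] at hL
  suffices collectedSpan v (v a) (v b) (L.filter fun c => c ≠ a ∧ c ≠ b) 3 3 ≤ ⊥ from
    (AddSubgroup.mem_bot).1 (this hL)
  refine (AddSubgroup.closure_le _).2 fun r hr => ?_
  cases hr with
  | word _ => simp [ha]
  | lieFst _ => simp [hb]
  | lieSnd _ => simp [ha]
  | lieBoth hAB => exact h _ _ hAB

end Collecting

/-- Star rings satisfying the consequences of `a ^ 3 = 0` and `T(a, b, c) = 0`, with star in the
role of the transpose.  In characteristic 3 every skew element is of the form `b - star b`, so
the skew elements `p` and `q` stand for `b - star b` and `c - star c`. -/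
class TransposeIdentity (R : Type*) [Ring R] [StarRing R] : Prop extends TwoEngelModThree R where
  mul_mul_add_mul_star_mul_add_mul_mul (a : R) (p q : skewAdjoint R) :
    a * p * q + p * star a * q + p * q * a = 0

namespace TransposeIdentity

variable {R : Type*} [Ring R] [StarRing R] [TransposeIdentity R]

theorem skew_mul_mul_skew (p : skewAdjoint R) (u : R) (q : skewAdjoint R) :
    p * u * q = -(star u * p * q) - p * q * star u := by
  have h := mul_mul_add_mul_star_mul_add_mul_mul (star u) p q
  rw [star_star] at h
  rw [eq_sub_iff_add_eq, eq_neg_iff_add_eq_zero, ← h]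
  abel

theorem skew_mul_skew_mul_skew (p q r : skewAdjoint R) : (p * q * r : R) = -(r * q * p) := by
  have hr := mul_mul_add_mul_star_mul_add_mul_mul (r : R) p q
  have hp := mul_mul_add_mul_star_mul_add_mul_mul (p : R) r q
  rw [skewAdjoint.star_val_eq, mul_neg, neg_mul] at hr hp
  rw [eq_neg_iff_add_eq_zero, ← add_zero (0 : R)]
  nth_rewrite 1 [← hr]
  rw [← hp]
  abel

theorem skew_mul_skew_mul_skew_mul_skew (p q r s : skewAdjoint R) :
    (p * q * r * s : R) = 0 := by
  have h := mul_mul_add_mul_star_mul_add_mul_mul (r * s : R) p q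
  rw [star_mul, skewAdjoint.star_val_eq, skewAdjoint.star_val_eq, neg_mul_neg, ← mul_assoc (p : R),
    skew_mul_skew_mul_skew p s r, neg_mul, ← mul_assoc, add_neg_cancel, zero_add] at h
  exact h

theorem skew_mul_skew_mul_mul_skew_mul_skew (p q : skewAdjoint R) (u : R) (r s : skewAdjoint R) :
    p * q * u * r * s = 0 := by
  have left : (p * star u * q * r * s : R) = -(p * q * u * r * s) := calc
    _ = -(u * (p * q * r * s)) - p * q * u * r * s := by
      rw [skew_mul_mul_skew, star_star]
      noncomm_ring
    _ = -(p * q * u * r * s) := by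
      rw [skew_mul_skew_mul_skew_mul_skew, mul_zero, neg_zero, zero_sub]
  have right : (p * q * (r * star u * s) : R) = -(p * q * u * r * s) := calc
    _ = -(p * q * u * r * s) - p * q * r * s * u := by
      rw [skew_mul_mul_skew, star_star]
      noncomm_ring
    _ = -(p * q * u * r * s) := by
      rw [skew_mul_skew_mul_skew_mul_skew, zero_mul, sub_zero]
  have middle : p * q * u * r * s = -(p * star u * q * r * s) - p * q * (r * star u * s) := calc
    _ = (p : R) * (q * u * r) * s := by simp only [mul_assoc]
    _ = -(p * star u * q * r * s) - p * q * (r * star u * s) := by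
      rw [skew_mul_mul_skew q u r]
      noncomm_ring
  rw [left, right, neg_neg, sub_neg_eq_add] at middle
  exact left_eq_add.1 middle

theorem skew_mul_mul_skew_mul_skew_mul_skew (p q : skewAdjoint R) (u v : R) (r s : skewAdjoint R) :
    p * u * q * v * r * s = 0 := calc
  _ = -(star u * (p * q * v * r * s)) - p * q * (star u * v) * r * s := by
    rw [skew_mul_mul_skew]
    noncomm_ring
  _ = 0 := by
    rw [skew_mul_skew_mul_mul_skew_mul_skew, skew_mul_skew_mul_mul_skew_mul_skew, mul_zero,
      neg_zero, sub_zero]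

theorem skew_mul_mul_skew_mul_mul_skew_mul_mul_skew (p q r s : skewAdjoint R) (u v w : R) :
    p * u * q * v * (r * w * s) = 0 := calc
  _ = -(p * u * q * (v * star w) * r * s) - p * u * q * v * r * s * star w := by
    rw [skew_mul_mul_skew r]
    noncomm_ring
  _ = 0 := by
    rw [skew_mul_mul_skew_mul_skew_mul_skew, skew_mul_mul_skew_mul_skew_mul_skew, zero_mul,
      neg_zero, sub_zero]

end TransposeIdentity

section StarRing

variable {R : Type*} [Ring R] [StarRing R]

/-- The skew element `a - star a`, the analogue of `ā`. -/
def subStar (a : R) : skewAdjoint R :=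
  ⟨a - star a, by rw [skewAdjoint.mem_iff, star_sub, star_star, neg_sub]⟩

theorem lie_eq_subStar (x y : R) :
    ⁅x, y⁆ = subStar (x * y) - subStar y * star x - y * subStar x := by
  simp only [subStar, Ring.lie_def, star_mul]
  noncomm_ring

end StarRing

/-- The factors of the products under consideration: letters from `κ`, skew elements, and
arbitrary elements of `R`, which serve as coefficients. -/
inductive Factor (κ R : Type*) [Ring R] [StarRing R]
  | letter (i : κ)
  | skew (p : skewAdjoint R)
  | coeff (r : R)

namespace Factor

variable {κ R : Type*} [Ring R] [StarRing R]

/-- The element of `R` represented by a factor, the letter `i` being interpreted as `x i`. -/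
def val (x : κ → R) : Factor κ R → R
  | letter i => x i
  | skew p => p
  | coeff r => r

/-- Whether a factor is marked as skew; a coefficient is not, even if its value is skew. -/
def isSkew : Factor κ R → Bool
  | skew _ => true
  | _ => false

noncomputable instance : DecidableEq (Factor κ R) := Classical.decEq _

theorem exists_eq_append_skew_cons {L : List (Factor κ R)} {n : ℕ} (h : n < L.countP isSkew) :
    ∃ A p B, L = A ++ skew p :: B ∧ n ≤ B.countP isSkew := by
  induction L with
  | nil => simp at h
  | cons c L ih =>
    by_cases hc : c.isSkew
    · obtain ⟨p, rfl⟩ : ∃ p, c = skew p := by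
        cases c <;> simp [isSkew] at hc ⊢
      exact ⟨[], p, L, rfl, Nat.lt_succ_iff.1 (by simpa only [List.countP_cons_of_pos hc] using h)⟩
    · obtain ⟨A, p, B, rfl, hB⟩ := ih (by simpa [hc] using h)
      exact ⟨c :: A, p, B, rfl, hB⟩

theorem prod_eq_zero_of_exchange [TwoEngelModThree R] (x : κ → R) {i j : κ} (hij : i ≠ j)
    (hi : x i ^ 3 = 0) (hj : x j ^ 3 = 0) {L : List (Factor κ R)} (hLi : L.count (letter i) = 3)
    (hLj : L.count (letter j) = 3)
    (h : ∀ L' : List (Factor κ R), L.countP isSkew < L'.countP isSkew →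
      (∀ k, k ≠ i → k ≠ j → L'.count (letter k) = L.count (letter k)) →
      (L'.map (val x)).prod = 0) :
    (L.map (val x)).prod = 0 := by
  refine prod_eq_zero_of_count_eq_three (val x) (a := letter i) (b := letter j) (by simpa)
    hi hj hLi hLj fun A B hAB => ?_
  have countP_AB : A.countP isSkew + B.countP isSkew = L.countP isSkew := by
    rw [← List.countP_append, hAB.countP_eq, List.countP_filter]
    refine List.countP_congr fun c _ => ?_
    cases c <;> simp [isSkew]
  have count_AB {k : κ} (hki : k ≠ i) (hkj : k ≠ j) :
      A.count (letter k) + B.count (letter k) = L.count (letter k) := by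
    rw [← List.count_append, hAB.count_eq, List.count_filter (by simp [hki, hkj])]
  have exchange {E : List (Factor κ R)} (hE : 0 < E.countP isSkew)
      (hE' : ∀ k, k ≠ i → k ≠ j → E.count (letter k) = 0) :
      x i ^ 2 * x j ^ 2 *
        ((A.map (val x)).prod * (E.map (val x)).prod * (B.map (val x)).prod) = 0 := by
    have hL' := h ([letter i, letter i, letter j, letter j] ++ (A ++ E ++ B))
      (by simp only [List.countP_append]; omega)
      (fun k hki hkj => by simp [hki.symm, hkj.symm, hE' k hki hkj, count_AB hki hkj])
    simpa [val, pow_two, mul_assoc] using hL'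
  calc
    _ = x i ^ 2 * x j ^ 2 * ((A.map (val x)).prod *
            ([skew (subStar (x i * x j))].map (val x)).prod * (B.map (val x)).prod)
        - x i ^ 2 * x j ^ 2 * ((A.map (val x)).prod *
            ([skew (subStar (x j)), coeff (star (x i))].map (val x)).prod * (B.map (val x)).prod)
        - x i ^ 2 * x j ^ 2 * ((A.map (val x)).prod *
            ([letter j, skew (subStar (x i))].map (val x)).prod * (B.map (val x)).prod) := by
      simp only [val, lie_eq_subStar (x i), List.map_cons, List.map_nil, List.prod_cons,
        List.prod_nil]
      noncomm_ring
    _ = 0 := by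
      rw [exchange, exchange, exchange, sub_zero, sub_zero]
      all_goals simp +contextual [isSkew, List.count_eq_zero]

variable [TransposeIdentity R]

theorem prod_eq_zero_of_four_le_countP_isSkew (x : κ → R) {L : List (Factor κ R)}
    (hL : 4 ≤ L.countP isSkew) : (L.map (val x)).prod = 0 := by
  obtain ⟨A, p, L₁, rfl, h₁⟩ := exists_eq_append_skew_cons hL
  obtain ⟨U, q, L₂, rfl, h₂⟩ := exists_eq_append_skew_cons h₁
  obtain ⟨V, r, L₃, rfl, h₃⟩ := exists_eq_append_skew_cons h₂
  obtain ⟨W, s, B, rfl, -⟩ := exists_eq_append_skew_cons h₃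
  have h := TransposeIdentity.skew_mul_mul_skew_mul_mul_skew_mul_mul_skew p q r s
    (U.map (val x)).prod (V.map (val x)).prod (W.map (val x)).prod
  calc
    _ = (A.map (val x)).prod * (p * (U.map (val x)).prod * q * (V.map (val x)).prod *
          (r * (W.map (val x)).prod * s)) * (B.map (val x)).prod := by simp [val, mul_assoc]
    _ = 0 := by rw [h, mul_zero, zero_mul]

theorem prod_eq_zero (x : κ → R) {X : Finset κ} (hx : ∀ i ∈ X, x i ^ 3 = 0)
    {L : List (Factor κ R)} (hL : ∀ i ∈ X, L.count (letter i) = 3)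
    (h : 8 ≤ X.card + 2 * L.countP isSkew) : (L.map (val x)).prod = 0 := by
  classical
  induction X using Finset.strongInduction generalizing L with
  | H X ih =>
  obtain hs | hs := le_or_gt 4 (L.countP isSkew)
  · exact prod_eq_zero_of_four_le_countP_isSkew x hs
  obtain ⟨i, hi, j, hj, hij⟩ := Finset.one_lt_card.1 (show 1 < X.card by omega)
  refine prod_eq_zero_of_exchange x hij (hx i hi) (hx j hj) (hL i hi) (hL j hj)
    fun L' hskew hcount => ih ((X.erase j).erase i) ?_ ?_ ?_ ?_
  · exact (Finset.erase_subset _ _).trans_ssubset (Finset.erase_ssubset hj)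
  · exact fun k hk => hx k (Finset.mem_of_mem_erase (Finset.mem_of_mem_erase hk))
  · intro k hk
    obtain ⟨hki, hkj, hkX⟩ : k ≠ i ∧ k ≠ j ∧ k ∈ X := by simpa using hk
    rw [hcount k hki hkj, hL k hkX]
  · rw [Finset.card_erase_of_mem (Finset.mem_erase.2 ⟨hij, hi⟩), Finset.card_erase_of_mem hj]
    omega

end Factor

section FreeAlgebra

variable {F d}

theorem tp_mul (a b : FA F d) : tp F d (a * b) = tp F d b * tp F d a := by simp [tp]

theorem tp_add (a b : FA F d) : tp F d (a + b) = tp F d a + tp F d b := by simp [tp]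

theorem tp_sub (a b : FA F d) : tp F d (a - b) = tp F d a - tp F d b := by simp [tp]

theorem tp_smul (c : F) (a : FA F d) : tp F d (c • a) = c • tp F d a := by simp [tp]

theorem tp_neg (a : FA F d) : tp F d (-a) = -tp F d a := by simp [tp]

theorem tp_algebraMap (c : F) : tp F d (algebraMap F _ c) = algebraMap F _ c := by simp [tp]

theorem tp_wordOf (l : List (Ltr d)) :
    tp F d (wordOf F d l) = wordOf F d (l.reverse.map fun p => (p.1, !p.2)) := by
  simp [tp, wordOf, map_list_prod, unop_list_prod, Function.comp_def]

theorem tp_tp (a : FA F d) : tp F d (tp F d a) = a := by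
  induction a using FreeAlgebra.induction with
  | grade0 c => rw [tp_algebraMap, tp_algebraMap]
  | grade1 x => simp [tp]
  | mul a b ha hb => rw [tp_mul, tp_mul, ha, hb]
  | add a b ha hb => rw [tp_add, tp_add, ha, hb]

theorem tp_bar (a : FA F d) : tp F d (bar F d a) = -bar F d a := by
  rw [bar, tp_sub, tp_tp, neg_sub]

theorem bar_algebraMap_add (c : F) (a : FA F d) : bar F d (algebraMap F _ c + a) = bar F d a := by
  rw [bar, bar, tp_add, tp_algebraMap, add_sub_add_left_eq_sub]

theorem tp_Trel (a b c : FA F d) : tp F d (Trel F d a b c) = Trel F d (tp F d a) c b := by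
  simp only [Trel, tp_add, tp_mul, tp_bar, tp_tp]
  noncomm_ring

theorem wordOf_mem_MFsub {l : List (Ltr d)} (hl : l ≠ []) : wordOf F d l ∈ MFsub F d :=
  Submodule.subset_span ⟨l, hl, rfl⟩

theorem tp_mem_MFsub {a : FA F d} (ha : a ∈ MFsub F d) : tp F d a ∈ MFsub F d := by
  induction ha using Submodule.span_induction with
  | mem a ha =>
    obtain ⟨l, hl, rfl⟩ := ha
    rw [tp_wordOf]
    exact wordOf_mem_MFsub (by simpa using hl)
  | zero => simp [tp]
  | add a b _ _ ha hb => exact tp_add a b ▸ add_mem ha hb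
  | smul c a _ ha => exact tp_smul c a ▸ Submodule.smul_mem _ c ha

theorem tp_mem_idealA {a : FA F d} (ha : a ∈ idealA F d) : tp F d a ∈ idealA F d := by
  induction ha using TwoSidedIdeal.span_induction with
  | mem a ha =>
    obtain ⟨n, hn, rfl⟩ | ⟨a, ha, b, hb, c, hc, rfl⟩ := ha
    · refine TwoSidedIdeal.subset_span (.inl ⟨tp F d n, tp_mem_MFsub hn, ?_⟩)
      simp only [pow_succ, pow_zero, one_mul, tp_mul, mul_assoc]
    · exact TwoSidedIdeal.subset_span
        (.inr ⟨_, tp_mem_MFsub ha, c, hc, b, hb, tp_Trel a b c⟩)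
  | zero => simp [tp]
  | add a b _ _ ha hb => exact tp_add a b ▸ add_mem ha hb
  | neg a _ ha => exact tp_neg a ▸ neg_mem ha
  | left_absorb b a _ ha => exact tp_mul b a ▸ TwoSidedIdeal.mul_mem_right _ _ _ ha
  | right_absorb b a _ ha => exact tp_mul a b ▸ TwoSidedIdeal.mul_mem_left _ _ _ ha

theorem exists_eq_algebraMap_add_mem_MFsub (a : FA F d) :
    ∃ c, ∃ n ∈ MFsub F d, a = algebraMap F _ c + n := by
  have ha : a ∈ Submodule.span F
      ((Submonoid.closure (Set.range (FreeAlgebra.ι F)) : Submonoid (FA F d)) : Set (FA F d)) := by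
    rw [← Algebra.adjoin_eq_span, FreeAlgebra.adjoin_range_ι]
    trivial
  induction ha using Submodule.span_induction with
  | mem a ha =>
    obtain ⟨_, hl, rfl⟩ := Submonoid.exists_list_of_mem_closure ha
    obtain ⟨l, rfl⟩ := (Set.range_list_map (FreeAlgebra.ι F)).ge hl
    obtain rfl | hl := eq_or_ne l []
    · exact ⟨1, 0, zero_mem _, by simp⟩
    · exact ⟨0, wordOf F d l, wordOf_mem_MFsub hl, by simp [wordOf]⟩
  | zero => exact ⟨0, 0, zero_mem _, by simp⟩
  | add a b _ _ ha hb =>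
    obtain ⟨c, m, hm, rfl⟩ := ha
    obtain ⟨e, n, hn, rfl⟩ := hb
    exact ⟨c + e, m + n, add_mem hm hn, by rw [map_add, add_add_add_comm]⟩
  | smul e a _ ha =>
    obtain ⟨c, n, hn, rfl⟩ := ha
    exact ⟨e * c, e • n, Submodule.smul_mem _ e hn, by rw [smul_add, map_mul, Algebra.smul_def]⟩

theorem lie_lie_self_mem_idealA [CharP F 3] (a b : FA F d) : ⁅a, ⁅a, b⁆⁆ ∈ idealA F d := by
  have lie_algebraMap_add (e : F) (x y : FA F d) : ⁅algebraMap F _ e + x, y⁆ = ⁅x, y⁆ := by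
    rw [Ring.lie_def, Ring.lie_def, add_mul, mul_add, Algebra.commutes, add_sub_add_left_eq_sub]
  have lie_add_algebraMap (e : F) (x y : FA F d) : ⁅x, algebraMap F _ e + y⁆ = ⁅x, y⁆ := by
    rw [Ring.lie_def, Ring.lie_def, add_mul, mul_add, Algebra.commutes, add_sub_add_left_eq_sub]
  obtain ⟨c, m, hm, rfl⟩ := exists_eq_algebraMap_add_mem_MFsub a
  obtain ⟨e, n, hn, rfl⟩ := exists_eq_algebraMap_add_mem_MFsub b
  rw [lie_algebraMap_add, lie_algebraMap_add, lie_add_algebraMap]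
  have linearize : ⁅m, ⁅m, n⁆⁆ = (m - n) ^ 3 - (m + n) ^ 3 - n ^ 3
      + 3 * (m ^ 2 * n + n * m ^ 2 + n ^ 3) := by
    simp only [Ring.lie_def]
    noncomm_ring
  have cube_mem {x : FA F d} (hx : x ∈ MFsub F d) : x ^ 3 ∈ idealA F d :=
    TwoSidedIdeal.subset_span (.inl ⟨x, hx, rfl⟩)
  rw [linearize, CharP.ofNat_eq_zero (FA F d) 3, zero_mul, add_zero]
  exact sub_mem (sub_mem (cube_mem (sub_mem hm hn)) (cube_mem (add_mem hm hn))) (cube_mem hn)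

theorem Trel_mem_idealA [CharP F 3] (a b c : FA F d) : Trel F d a b c ∈ idealA F d := by
  obtain ⟨k, a, ha, rfl⟩ := exists_eq_algebraMap_add_mem_MFsub a
  obtain ⟨e, b, hb, rfl⟩ := exists_eq_algebraMap_add_mem_MFsub b
  obtain ⟨f, c, hc, rfl⟩ := exists_eq_algebraMap_add_mem_MFsub c
  have scalar_part : Trel F d (algebraMap F _ k + a) b c =
      Trel F d a b c + 3 * (algebraMap F _ k * bar F d b * bar F d c) := by
    simp only [Trel, tp_add, tp_algebraMap, mul_add, add_mul, mul_assoc,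
      ← Algebra.commutes k (bar F d c), Algebra.left_comm]
    noncomm_ring
  have ignores_scalars : Trel F d (algebraMap F _ k + a) (algebraMap F _ e + b)
      (algebraMap F _ f + c) = Trel F d (algebraMap F _ k + a) b c := by
    simp only [Trel, bar_algebraMap_add]
  rw [ignores_scalars, scalar_part, CharP.ofNat_eq_zero (FA F d) 3, zero_mul, add_zero]
  exact TwoSidedIdeal.subset_span (.inr ⟨a, ha, b, hb, c, hc, rfl⟩)

/-- The quotient of the unital free algebra by `idealA F d`: the algebra `A_{3,d}` with a unit
adjoined. -/
abbrev UnitizationA (F : Type) [Field F] (d : ℕ) := (idealA F d).ringCon.Quotient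

namespace UnitizationA

/-- The projection of the free algebra onto the quotient. -/
def mk (F : Type) [Field F] (d : ℕ) : FA F d →+* UnitizationA F d := (idealA F d).ringCon.mk'

theorem mk_surjective : Function.Surjective (mk F d) := RingCon.mk'_surjective _

theorem mk_eq_zero {a : FA F d} : mk F d a = 0 ↔ a ∈ idealA F d := by
  rw [mk, ← TwoSidedIdeal.mem_ker, TwoSidedIdeal.ker_ringCon_mk']

instance : StarRing (UnitizationA F d) where
  star := Quotient.map' (tp F d) fun a b hab =>
    ((idealA F d).rel_iff _ _).2 (tp_sub a b ▸ tp_mem_idealA (((idealA F d).rel_iff _ _).1 hab))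
  star_involutive q := by
    obtain ⟨a, rfl⟩ := mk_surjective q
    exact congrArg (mk F d) (tp_tp a)
  star_mul q r := by
    obtain ⟨a, rfl⟩ := mk_surjective q
    obtain ⟨b, rfl⟩ := mk_surjective r
    exact congrArg (mk F d) (tp_mul a b)
  star_add q r := by
    obtain ⟨a, rfl⟩ := mk_surjective q
    obtain ⟨b, rfl⟩ := mk_surjective r
    exact congrArg (mk F d) (tp_add a b)

theorem star_mk (a : FA F d) : star (mk F d a) = mk F d (tp F d a) := rfl

theorem mk_bar (a : FA F d) : mk F d (bar F d a) = subStar (mk F d a) := map_sub _ _ _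

theorem three_eq_zero [CharP F 3] : (3 : UnitizationA F d) = 0 := by
  rw [← map_ofNat (mk F d) 3, CharP.ofNat_eq_zero (FA F d) 3, map_zero]

theorem exists_mk_bar_eq [CharP F 3] (p : skewAdjoint (UnitizationA F d)) :
    ∃ b, mk F d (bar F d b) = p := by
  obtain ⟨a, ha⟩ := mk_surjective (p : UnitizationA F d)
  refine ⟨-a, ?_⟩
  calc
    mk F d (bar F d (-a)) = -p - star (-p : UnitizationA F d) := by
      rw [← ha, ← map_neg, mk_bar, subStar]
    _ = p - 3 * p := by
      rw [star_neg, skewAdjoint.star_val_eq]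
      noncomm_ring
    _ = p := by rw [three_eq_zero, zero_mul, sub_zero]

instance [CharP F 3] : TransposeIdentity (UnitizationA F d) where
  three_eq_zero := three_eq_zero
  lie_lie_self q r := by
    obtain ⟨a, rfl⟩ := mk_surjective q
    obtain ⟨b, rfl⟩ := mk_surjective r
    have h := mk_eq_zero.2 (lie_lie_self_mem_idealA a b)
    simpa only [Ring.lie_def, map_sub, map_mul] using h
  mul_mul_add_mul_star_mul_add_mul_mul q p r := by
    obtain ⟨a, rfl⟩ := mk_surjective q
    obtain ⟨b, hb⟩ := exists_mk_bar_eq p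
    obtain ⟨c, hc⟩ := exists_mk_bar_eq r
    have h := mk_eq_zero.2 (Trel_mem_idealA a b c)
    simpa only [Trel, map_add, map_mul, hb, hc, star_mk] using h

theorem mk_ι_pow_three (p : Ltr d) : mk F d (FreeAlgebra.ι F p) ^ 3 = 0 := by
  rw [← map_pow, mk_eq_zero]
  exact TwoSidedIdeal.subset_span
    (.inl ⟨_, wordOf_mem_MFsub (List.cons_ne_nil p []), by simp [wordOf]⟩)

end UnitizationA

end FreeAlgebra

section Words

variable {F d}

open UnitizationA

/-- The word `l` as a list of factors: the letters `x_i` become letters and the letters `x_iᵀ`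
coefficients. -/
noncomputable def wordFactors (F : Type) [Field F] {d : ℕ} (l : List (Ltr d)) :
    List (Factor (Fin d) (UnitizationA F d)) :=
  l.map fun p => if p.2 then .coeff (mk F d (ι F p)) else .letter p.1

theorem prod_map_val_wordFactors (l : List (Ltr d)) :
    ((wordFactors F l).map (Factor.val fun i => mk F d (ι F (i, false)))).prod =
      mk F d (wordOf F d l) := by
  rw [wordFactors, wordOf, map_list_prod, List.map_map, List.map_map]
  congr 2
  funext ⟨i, t⟩
  cases t <;> rfl

theorem count_letter_wordFactors (l : List (Ltr d)) (i : Fin d) :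
    (wordFactors F l).count (.letter i) = l.count (i, false) := by
  rw [wordFactors, List.count, List.countP_map]
  refine List.countP_congr fun ⟨j, t⟩ _ => ?_
  cases t <;> simp

theorem countP_isSkew_wordFactors (l : List (Ltr d)) :
    (wordFactors F l).countP Factor.isSkew = 0 := by
  rw [wordFactors, List.countP_map, List.countP_eq_zero]
  rintro ⟨j, t⟩ _
  cases t <;> simp [Factor.isSkew]

/-- The product `u₁ ā₁ u₂ ā₂ ⋯ u_s ā_s u_{s+1}` as a list of factors. -/
noncomputable def interleavedFactors (F : Type) [Field F] {d s : ℕ} (a : Fin s → List (Ltr d))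
    (u : Fin (s + 1) → List (Ltr d)) : List (Factor (Fin d) (UnitizationA F d)) :=
  wordFactors F (u 0) ++ (List.ofFn fun i : Fin s =>
    .skew (subStar (mk F d (wordOf F d (a i)))) :: wordFactors F (u i.succ)).flatten

variable {s : ℕ} (a : Fin s → List (Ltr d)) (u : Fin (s + 1) → List (Ltr d))

theorem prod_map_val_interleavedFactors :
    ((interleavedFactors F a u).map (Factor.val fun i => mk F d (ι F (i, false)))).prod =
      mk F d (wordOf F d (u 0) *
        (List.ofFn fun i => bar F d (wordOf F d (a i)) * wordOf F d (u i.succ)).prod) := by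
  rw [interleavedFactors, List.map_append, List.prod_append, prod_map_val_wordFactors,
    List.map_flatten, List.prod_flatten, map_mul, map_list_prod, List.map_ofFn, List.map_ofFn,
    List.map_ofFn]
  congr 3
  funext i
  simp [prod_map_val_wordFactors, mk_bar, Factor.val]

theorem count_letter_interleavedFactors (i : Fin d) :
    (interleavedFactors F a u).count (.letter i) = ∑ j, (u j).count (i, false) := by
  rw [interleavedFactors, List.count_append, List.count_flatten, List.map_ofFn, List.sum_ofFn,
    Fin.sum_univ_succ]
  simp [count_letter_wordFactors]

theorem countP_isSkew_interleavedFactors :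
    (interleavedFactors F a u).countP Factor.isSkew = s := by
  rw [interleavedFactors, List.countP_append, List.countP_flatten, List.map_ofFn, List.sum_ofFn]
  simp [List.countP_cons, countP_isSkew_wordFactors, Factor.isSkew]

end Words

theorem stmt11_general (F : Type) [Field F] [CharP F 3] (d s : ℕ) (X : Finset (Fin d))
    (hX : 8 ≤ X.card + 2 * s) (a : Fin s → List (Ltr d)) (u : Fin (s + 1) → List (Ltr d))
    (hdeg : ∀ i ∈ X, ∑ j, (u j).count (i, false) = 3) :
    wordOf F d (u 0) *
      (List.ofFn fun i : Fin s => bar F d (wordOf F d (a i)) * wordOf F d (u i.succ)).prod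
      ∈ idealA F d := by
  rw [← UnitizationA.mk_eq_zero, ← prod_map_val_interleavedFactors]
  refine Factor.prod_eq_zero _ (X := X) (fun i _ => UnitizationA.mk_ι_pow_three _) ?_ ?_
  · exact fun i hi => (count_letter_interleavedFactors a u i).trans (hdeg i hi)
  · rwa [countP_isSkew_interleavedFactors]

/-- let `char F = 3`, `0 ≤ s ≤ 4`, let `x_{idx 1}, …, x_{idx (8-2s)}` be pairwise
different letters, `a₁, …, a_s ∈ M`, `u₁, …, u_{s+1} ∈ M₁` with `deg_{x_{idx i}}(u₁ ⋯ u_{s+1}) = 3`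
for all `i`.  Then `u₁ ā₁ u₂ ā₂ ⋯ u_s ā_s u_{s+1} = 0` in `A_{3,d}`. -/
theorem stmt11 (F : Type) [Field F] [Infinite F] [CharP F 3] (d : ℕ) (s : ℕ) (hs : s ≤ 4)
    (idx : Fin (8 - 2 * s) → Fin d) (hidx : Function.Injective idx)
    (a : Fin s → List (Ltr d)) (ha : ∀ i, a i ≠ [])
    (u : Fin (s + 1) → List (Ltr d))
    (hdeg : ∀ i : Fin (8 - 2 * s),
      (∑ j : Fin (s + 1), (u j).count ((idx i, false) : Ltr d)) = 3) :
    wordOf F d (u 0) *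
      (List.ofFn fun i : Fin s => bar F d (wordOf F d (a i)) * wordOf F d (u i.succ)).prod
      ∈ idealA F d :=
  stmt11_general F d s (Finset.univ.map ⟨idx, hidx⟩)
    (by simp only [Finset.card_map, Finset.card_fin]; omega) a u (by simpa using hdeg)
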